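/- Let σ₁, σ₂, σ₃ be the Pauli matrices and define the 4×4 complex matrices γ₂ = σ₃ ⊗ I₂ and γ_y = (iσ₂) ⊗ σ₁ (Kronecker products). For real β and c with c ≠ 0: the matrix c·I₄ + (β/√2)·γ₂γ_y has nonzero kernel if and only if β² = 2c², and in that case its kernel is a 2-dimensional complex subspace of ℂ⁴. -/

import Mathlib

open Matrix Complex
open scoped Kronecker

noncomputable section

/-- Pauli matrix σ₁. -/
def σ1 : Matrix (Fin 2) (Fin 2) ℂ := !![0, 1; 1, 0]
/-- Pauli matrix σ₂. -/
def σ2 : Matrix (Fin 2) (Fin 2) ℂ := !![0, -I; I, 0]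
/-- Pauli matrix σ₃. -/
def σ3 : Matrix (Fin 2) (Fin 2) ℂ := !![1, 0; 0, -1]

/-- γ₂ = σ₃ ⊗ I₂ (timelike). -/
def γ2' : Matrix (Fin 2 × Fin 2) (Fin 2 × Fin 2) ℂ := σ3 ⊗ₖ (1 : Matrix (Fin 2) (Fin 2) ℂ)
/-- γ_y = (iσ₂) ⊗ σ₁. -/
def γy : Matrix (Fin 2 × Fin 2) (Fin 2 × Fin 2) ℂ := (I • σ2) ⊗ₖ σ1
/-- γ₃ = (iσ₂) ⊗ σ₂. -/
def γ3' : Matrix (Fin 2 × Fin 2) (Fin 2 × Fin 2) ℂ := (I • σ2) ⊗ₖ σ2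
/-- γ₄ = (iσ₂) ⊗ σ₃. -/
def γ4' : Matrix (Fin 2 × Fin 2) (Fin 2 × Fin 2) ℂ := (I • σ2) ⊗ₖ σ3

/-!
Since `γ₂² = 1`, `γ_y² = -1` and the two anticommute, `γ₂γ_y` is a traceless involution. Hence
`N = (β/√2) γ₂γ_y` is traceless with `N² = β²/2`, so every eigenvalue of `N` squares to `β²/2`, and
the kernel of `c + N`, the `-c`-eigenspace of `N`, vanishes unless `β² = 2c²`. In that case
`(c - N) / 2c` is a projection onto this eigenspace, whose dimension is therefore its trace,
`4 / 2 = 2`.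
-/

lemma pow_eq_of_hasEigenvalue {R M : Type*} [CommRing R] [IsDomain R] [AddCommGroup M]
    [Module R M] [Module.IsTorsionFree R M] {f : Module.End R M} {μ a : R} {n : ℕ}
    (hf : f ^ n = a • 1) (h : f.HasEigenvalue μ) : μ ^ n = a := by
  obtain ⟨v, hv⟩ := h.exists_hasEigenvector
  refine smul_left_injective R hv.2 ?_
  simpa [hf] using (hv.pow_apply n).symm

section ScalarSquare

variable {K V : Type*} [Field K] [AddCommGroup V] [Module K V] {f : Module.End K V} {μ a : K}

lemma isProj_eigenspace_of_sq_eq (h2 : (2 : K) ≠ 0) (hμ : μ ≠ 0) (hf : f ^ 2 = μ ^ 2 • 1) :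
    LinearMap.IsProj (f.eigenspace μ) ((2 * μ)⁻¹ • (μ • 1 + f)) where
  map_mem v := by
    have hfv : f (f v) = μ ^ 2 • v := by
      simpa [pow_two f] using LinearMap.congr_fun hf v
    refine Submodule.smul_mem _ _ (Module.End.mem_eigenspace_iff.2 ?_)
    simp only [LinearMap.add_apply, LinearMap.smul_apply, Module.End.one_apply, map_add, map_smul,
      hfv]
    module
  map_id v hv := by
    have hfv : f v = μ • v := Module.End.mem_eigenspace_iff.1 hv
    simp only [LinearMap.add_apply, LinearMap.smul_apply, Module.End.one_apply, hfv]
    rw [← two_smul K (μ • v), smul_smul 2 μ v, inv_smul_smul₀ (mul_ne_zero h2 hμ)]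

lemma two_mul_finrank_eigenspace_of_trace_eq_zero [CharZero K] [FiniteDimensional K V] (hμ : μ ≠ 0)
    (hf : f ^ 2 = μ ^ 2 • 1) (htr : LinearMap.trace K V f = 0) :
    2 * Module.finrank K (f.eigenspace μ) = Module.finrank K V := by
  have h := (isProj_eigenspace_of_sq_eq two_ne_zero hμ hf).trace
  simp only [map_smul, map_add, LinearMap.trace_one, htr, add_zero, smul_eq_mul] at h
  field_simp at h
  exact_mod_cast h.symm

lemma hasEigenvalue_iff_sq_eq_of_trace_eq_zero [CharZero K] [FiniteDimensional K V] [Nontrivial V]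
    (hμ : μ ≠ 0) (hf : f ^ 2 = a • 1) (htr : LinearMap.trace K V f = 0) :
    f.HasEigenvalue μ ↔ μ ^ 2 = a := by
  refine ⟨pow_eq_of_hasEigenvalue hf, ?_⟩
  rintro rfl (hbot : f.eigenspace μ = ⊥)
  have hdim := two_mul_finrank_eigenspace_of_trace_eq_zero hμ hf htr
  rw [hbot, finrank_bot, mul_zero] at hdim
  exact Module.finrank_pos.ne hdim

end ScalarSquare

section Matrices

variable {n R : Type*} [Fintype n] [CommRing R]

lemma ker_mulVecLin_smul_one_add [DecidableEq n] (c : R) (A : Matrix n n R) :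
    LinearMap.ker (c • 1 + A).mulVecLin = Module.End.eigenspace A.toLin' (-c) := by
  ext v
  rw [LinearMap.mem_ker, mulVecLin_apply, add_mulVec, smul_mulVec, one_mulVec,
    Module.End.mem_eigenspace_iff, toLin'_apply, neg_smul, eq_neg_iff_add_eq_zero, add_comm]

lemma trace_mul_eq_zero_of_anticommute [IsAddTorsionFree R] {A B : Matrix n n R}
    (h : A * B = -(B * A)) : trace (A * B) = 0 := by
  rw [← self_eq_neg]
  calc trace (A * B) = -trace (B * A) := by rw [h, trace_neg]
    _ = -trace (A * B) := by rw [trace_mul_comm]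

end Matrices

lemma mul_sq_of_anticommute {R : Type*} [Ring R] {x y : R} (h : x * y = -(y * x)) :
    (x * y) ^ 2 = -(x ^ 2 * y ^ 2) := by
  calc (x * y) ^ 2 = x * (y * x) * y := by noncomm_ring
    _ = -(x ^ 2 * y ^ 2) := by rw [← neg_eq_iff_eq_neg.2 h]; noncomm_ring

lemma σ1_sq : σ1 ^ 2 = 1 := by
  simp [σ1, pow_two, one_fin_two]

lemma σ2_sq : σ2 ^ 2 = 1 := by
  simp [σ2, pow_two, one_fin_two]

lemma σ3_sq : σ3 ^ 2 = 1 := by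
  simp [σ3, pow_two, one_fin_two]

lemma σ3_mul_σ2 : σ3 * σ2 = -(σ2 * σ3) := by
  simp [σ2, σ3]

lemma γ2'_sq : γ2' ^ 2 = 1 := by
  rw [γ2', pow_two, ← mul_kronecker_mul, ← pow_two, σ3_sq, one_mul, one_kronecker_one]

lemma γy_sq : γy ^ 2 = -1 := by
  rw [γy, pow_two, ← mul_kronecker_mul, ← pow_two, ← pow_two, smul_pow, I_sq, σ1_sq, σ2_sq,
    smul_kronecker, one_kronecker_one, neg_one_smul]

lemma γ2'_mul_γy : γ2' * γy = -(γy * γ2') := by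
  rw [γ2', γy, ← mul_kronecker_mul, ← mul_kronecker_mul, mul_smul_comm, smul_mul_assoc, σ3_mul_σ2,
    one_mul, mul_one, smul_neg, ← neg_smul, smul_kronecker, smul_kronecker, neg_smul]

lemma γ2'_mul_γy_sq : (γ2' * γy) ^ 2 = 1 := by
  rw [mul_sq_of_anticommute γ2'_mul_γy, γ2'_sq, γy_sq, one_mul, neg_neg]

/-- The matrix `cI₄ + (β/√2) γ₂γ_y` has nonzero kernel iff `β² = 2c²`, in which case
its kernel is 2-dimensional (the half-BPS case λ₁ for `ℝ × AdS₄`). -/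
theorem stmt_7 (β c : ℝ) (hc : c ≠ 0) :
    (LinearMap.ker ((c : ℂ) • 1 + ((β / Real.sqrt 2 : ℝ) : ℂ) • (γ2' * γy)).mulVecLin ≠ ⊥ ↔
      β ^ 2 = 2 * c ^ 2) ∧
    (β ^ 2 = 2 * c ^ 2 →
      Module.finrank ℂ
        (LinearMap.ker ((c : ℂ) • 1 + ((β / Real.sqrt 2 : ℝ) : ℂ) • (γ2' * γy)).mulVecLin)
        = 2) := by
  have hc' : -(c : ℂ) ≠ 0 := neg_ne_zero.2 (ofReal_ne_zero.2 hc)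
  set b : ℂ := ((β / Real.sqrt 2 : ℝ) : ℂ)
  set N := (b • (γ2' * γy)).toLin'
  have hN : N ^ 2 = b ^ 2 • 1 := by
    rw [← toLin'_pow, smul_pow, γ2'_mul_γy_sq, map_smul, toLin'_one, Module.End.one_eq_id]
  have htr : LinearMap.trace ℂ _ N = 0 := by
    rw [trace_toLin'_eq, trace_smul, trace_mul_eq_zero_of_anticommute γ2'_mul_γy, smul_zero]
  have hβ : (-(c : ℂ)) ^ 2 = b ^ 2 ↔ β ^ 2 = 2 * c ^ 2 := by
    rw [neg_sq, eq_comm, ← ofReal_pow, ← ofReal_pow, ofReal_inj,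
      div_pow, Real.sq_sqrt zero_le_two, div_eq_iff two_ne_zero, mul_comm]
  rw [ker_mulVecLin_smul_one_add, ← hβ]
  refine ⟨hasEigenvalue_iff_sq_eq_of_trace_eq_zero hc' hN htr, fun h => ?_⟩
  have hdim := two_mul_finrank_eigenspace_of_trace_eq_zero hc' (h ▸ hN) htr
  rw [Module.finrank_fintype_fun_eq_card, Fintype.card_prod, Fintype.card_fin] at hdim
  exact Nat.eq_of_mul_eq_mul_left two_pos hdim

end
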